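/- arXiv:1611.08564 — 2 statements merged into one kernel-verified Lean document; each statement's English description precedes it below -/
import Mathlib

section
/- There exists an increasing map φ : ℕ → ℕ such that for all φ-increasing sequences (n_k), (m_k), (t_k) of positive integers the following holds: for every l, n ≥ 1, every ε > 0, every entire function f and every K ≥ 1, there exist x ∈ H(ℂ) and k₀, k₁, k₂ ≥ K such that p_l(x) < ε and such that for every b ∈ [−n, n] and every a ∈ 𝕋: (1) there exists s ∈ [n_{k₀}, n_{k₀} + φ(n_{k₀})] with p_l(e^{bs} D^s x − f) < ε; (2) there exists s ∈ [m_{k₁}, m_{k₁} + φ(m_{k₁})] with p_l(e^{bs} T_a^s x − f) < ε; (3) there exists s ∈ [t_{k₂}, t_{k₂} + φ(t_{k₂})] with p_l(e^{bs} T_1^s x − f) < ε. -/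
/-!
The map `φ(N) = N²` works. For all three operators the parameters `b ∈ [-n, n]` (and `a ∈ 𝕋`) have to
be covered by finitely many small pieces, each of them assigned to its own integer `s` of the block;
since `e^{bs}` changes by a bounded factor when `b` moves by `1/s`, the integer `s` covers a length of
order `1/s`, and the divergence of the harmonic series makes the covering possible inside
`[N, C N]`, where `C` does not depend on `N` (`exists_logNode`; the nodes are logarithmic).

For `D`, approximate `f` by a polynomial and superpose its iterated antiderivatives
(`exists_derivative_block`).

For `T_a` the point is to treat a full set of directions without losing a factor: a circle of
radius `s` has room for about `s` disjoint discs, so boundedly many consecutive circles are enough to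
reach all `a ∈ 𝕋` with a single value of `b`. Prescribing an entire function on such a collection
of discs is a Runge-type problem, which has an explicit solution here. If the centres are `s e ζ`
with `ζ ^ n = 1`, the map `z ↦ (z / (s e)) ^ n` sends all discs close to `1` and a large disc around
`0` close to `0`. The iterates of `3v² - 2v³` are then nearly the characteristic function of the union
of the discs, while a Newton-type iteration for `y ^ n = 1`, started at `z / (s e)`, returns `ζ` and
hence the centre of the disc containing `z` (`exists_entire_step`).

The three blocks are combined by successive perturbation: the function for `D` is perturbed far away
to serve the second block, and still farther away to serve the third, which is the case `a = 1`.
Cauchy's estimates show that the property for `D` survives.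
-/

open Filter Metric Set

noncomputable def pnorm (j : ℝ) (f : ℂ → ℂ) : ℝ :=
  sSup ((fun z => ‖f z‖) '' Metric.closedBall (0 : ℂ) j)

/-- Convergence in `H(ℂ)`, i.e. uniform convergence on every compact subset of `ℂ`. -/
def TendstoH (F : ℕ → ℂ → ℂ) (f : ℂ → ℂ) : Prop :=
  ∀ j : ℕ, 1 ≤ j → Filter.Tendsto (fun k => pnorm j (F k - f)) Filter.atTop (nhds 0)

/-- A set of entire functions is dense in `H(ℂ)`. -/
def DenseH (S : Set (ℂ → ℂ)) : Prop :=
  ∀ f : ℂ → ℂ, Differentiable ℂ f → ∀ j : ℕ, 1 ≤ j → ∀ ε : ℝ, 0 < ε →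
    ∃ g ∈ S, pnorm j (g - f) < ε

/-- A set of entire functions is (sequentially) closed in `H(ℂ)`. -/
def ClosedH (M : Set (ℂ → ℂ)) : Prop :=
  ∀ (F : ℕ → ℂ → ℂ) (f : ℂ → ℂ), (∀ k, F k ∈ M) → Differentiable ℂ f →
    TendstoH F f → f ∈ M

/-- The operator `μ D`, `f ↦ μ f'`. -/
noncomputable def derivOp (μ : ℂ) : (ℂ → ℂ) → ℂ → ℂ := fun f z => μ * deriv f z

/-- The operator `μ T_a`, `f ↦ μ f(· + a)`. -/
def transOp (μ a : ℂ) : (ℂ → ℂ) → ℂ → ℂ := fun f z => μ * f (z + a)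

/-- The translation operator `T_a`, `f ↦ f(· + a)`. -/
def translOp (a : ℂ) : (ℂ → ℂ) → ℂ → ℂ := fun f z => f (z + a)

/-- `f` has dense orbit under `S` in `H(ℂ)`. -/
def HypercyclicFor (S : (ℂ → ℂ) → ℂ → ℂ) (f : ℂ → ℂ) : Prop :=
  ∀ g : ℂ → ℂ, Differentiable ℂ g → ∀ j : ℕ, 1 ≤ j → ∀ ε : ℝ, 0 < ε →
    ∃ n : ℕ, pnorm j (S^[n] f - g) < ε

/-- `M` is a closed infinite-dimensional subspace of `H(ℂ)`. -/
def IsClosedInfDimSubspaceH (M : Submodule ℂ (ℂ → ℂ)) : Prop :=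
  (∀ f ∈ M, Differentiable ℂ f) ∧ ClosedH (M : Set (ℂ → ℂ)) ∧ ¬ FiniteDimensional ℂ M

/-- `a` does not belong to the arc `{e^{iα} : α ∈ (-θ, θ)}` of the unit circle. -/
def OutsideArc (θ : ℝ) (a : ℂ) : Prop :=
  ∀ α : ℝ, -θ < α → α < θ → a ≠ Complex.exp (α * Complex.I)

/-- A sequence `(n_k)_{k ≥ 1}` of positive integers is `φ`-increasing. -/
def PhiIncreasing (φ : ℕ → ℕ) (n : ℕ → ℕ) : Prop :=
  (∀ k, 1 ≤ k → 1 ≤ n k) ∧ ∀ k, 1 ≤ k → n k + φ (n k) < n (k + 1)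

/-- `q` is a continuous seminorm on `H(ℂ)`. -/
def IsContinuousSeminormH (q : (ℂ → ℂ) → ℝ) : Prop :=
  (∀ f g : ℂ → ℂ, Differentiable ℂ f → Differentiable ℂ g → q (f + g) ≤ q f + q g) ∧
  (∀ (c : ℂ) (f : ℂ → ℂ), Differentiable ℂ f → q (c • f) = ‖c‖ * q f) ∧
  (∃ (C : ℝ) (i : ℕ), 0 < C ∧ 1 ≤ i ∧ ∀ f : ℂ → ℂ, Differentiable ℂ f → q f ≤ C * pnorm i f)

/-- `q` is a continuous norm on `H(ℂ)`. -/
def IsContinuousNormH (q : (ℂ → ℂ) → ℝ) : Prop :=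
  IsContinuousSeminormH q ∧ ∀ f : ℂ → ℂ, Differentiable ℂ f → q f = 0 → f = 0

/-! ### Superattracting polynomial iterations -/

/-- The cubic `3v² - 2v³`, with superattracting fixed points `0` and `1`. Its iterates are
polynomials converging uniformly to `0` near `0` and to `1` near `1`, so they separate two discs. -/
noncomputable def smoothStep (v : ℂ) : ℂ := 3 * v ^ 2 - 2 * v ^ 3

/-- A polynomial substitute for Newton's iteration for `y ^ n = 1`: every `n`-th root of unity is
a superattracting fixed point, so the iterates converge to the nearest root of unity. -/
noncomputable def rootNewton (n : ℕ) (y : ℂ) : ℂ := y * (1 + (1 - y ^ n) / n)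

lemma norm_one_add_pow_sub_one_le (u : ℂ) (n : ℕ) :
    ‖(1 + u) ^ n - 1‖ ≤ Real.exp (n * ‖u‖) - 1 := by
  have h1 : ‖(1 + u) ^ n - 1‖ ≤ (1 + ‖u‖) ^ n - 1 := by
    induction n with
    | zero => simp
    | succ k ih =>
      have e : (1 + u) ^ (k + 1) - 1 = ((1 + u) ^ k - 1) * (1 + u) + u := by ring
      have h2 : ‖1 + u‖ ≤ 1 + ‖u‖ := by simpa using norm_add_le (1 : ℂ) u
      calc ‖(1 + u) ^ (k + 1) - 1‖ ≤ ‖(1 + u) ^ k - 1‖ * ‖1 + u‖ + ‖u‖ := by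
            rw [e]; exact (norm_add_le _ _).trans (by rw [norm_mul])
        _ ≤ ((1 + ‖u‖) ^ k - 1) * (1 + ‖u‖) + ‖u‖ := by gcongr; exact (norm_nonneg _).trans ih
        _ = _ := by ring
  have h2 : (1 + ‖u‖) ^ n ≤ Real.exp (n * ‖u‖) := by
    rw [Real.exp_nat_mul]
    gcongr
    linarith [Real.add_one_le_exp ‖u‖]
  linarith

lemma exp_fifth_le : Real.exp (1 / 5) ≤ 5 / 4 := by
  have := Real.exp_bound_div_one_sub_of_interval (x := 1/5) (by norm_num) (by norm_num)
  linarith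

lemma norm_one_sub_pow_le {n : ℕ} {y : ℂ} (h : n * ‖y - 1‖ ≤ 1 / 5) : ‖1 - y ^ n‖ ≤ 1 / 4 := by
  have h1 := norm_one_add_pow_sub_one_le (y - 1) n
  rw [add_sub_cancel, norm_sub_rev] at h1
  have := Real.exp_le_exp.2 h
  linarith [exp_fifth_le]

lemma norm_iterate_smoothStep_le {v : ℂ} (hv : ‖v‖ ≤ 1 / 4) (k : ℕ) :
    ‖smoothStep^[k] v‖ ≤ (7 / 8) ^ k * (1 / 4) := by
  induction k with
  | zero => simpa using hv
  | succ k ih =>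
    rw [Function.iterate_succ_apply']
    set w := smoothStep^[k] v
    have hw : ‖w‖ ≤ 1 / 4 := ih.trans (by
      have : ((7 : ℝ) / 8) ^ k ≤ 1 := pow_le_one₀ (by norm_num) (by norm_num)
      linarith)
    have h1 : ‖3 - 2 * w‖ ≤ 7 / 2 := by
      have := norm_sub_le 3 (2 * w)
      rw [norm_mul] at this
      norm_num at this
      linarith
    calc ‖smoothStep w‖ = ‖w‖ * (‖w‖ * ‖3 - 2 * w‖) := by
          rw [← norm_mul, ← norm_mul]; congr 1; unfold smoothStep; ring
      _ ≤ ((7 / 8) ^ k * (1 / 4)) * (1 / 4 * (7 / 2)) := by gcongr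
      _ = _ := by ring

lemma norm_iterate_smoothStep_sub_one_le {v : ℂ} (hv : ‖1 - v‖ ≤ 1 / 4) (k : ℕ) :
    ‖smoothStep^[k] v - 1‖ ≤ (7 / 8) ^ k * (1 / 4) := by
  have hs : Function.Semiconj (fun v : ℂ => 1 - v) smoothStep smoothStep := fun v => by
    simp only [smoothStep]; ring
  have := (hs.iterate_right k).eq v
  rw [norm_sub_rev, this]
  exact norm_iterate_smoothStep_le hv k

lemma norm_rootNewton_sub_one_le {n : ℕ} (hn : 1 ≤ n) {y : ℂ} (h : n * ‖y - 1‖ ≤ 1 / 5) :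
    ‖rootNewton n y - 1‖ ≤ 1 / 2 * ‖y - 1‖ := by
  have hn0 : (0 : ℝ) < n := by exact_mod_cast hn
  have hnc : (n : ℂ) ≠ 0 := by exact_mod_cast hn0.ne'
  have hd : ∀ w : ℂ, HasDerivAt (rootNewton n) ((1 + 1 / (n : ℂ)) * (1 - w ^ n)) w := by
    intro w
    have := (hasDerivAt_id w).mul ((((hasDerivAt_pow n w).const_sub 1).div_const (n : ℂ)).const_add 1)
    refine this.congr_deriv ?_
    obtain ⟨k, rfl⟩ : ∃ k, n = k + 1 := ⟨n - 1, by omega⟩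
    simp only [id, add_tsub_cancel_right]
    field_simp
    ring
  have hy : y ∈ closedBall (1 : ℂ) ‖y - 1‖ := by simp [dist_eq_norm]
  have key := (convex_closedBall (1 : ℂ) ‖y - 1‖).norm_image_sub_le_of_norm_hasDerivWithin_le
    (f := rootNewton n) (f' := fun w => (1 + 1 / (n : ℂ)) * (1 - w ^ n)) (C := 1 / 2)
    (fun w _ => (hd w).hasDerivWithinAt) (fun w hw => by
      have h1 : ‖1 - w ^ n‖ ≤ 1 / 4 := norm_one_sub_pow_le (by
        rw [mem_closedBall, dist_eq_norm] at hw
        exact (by gcongr : (n : ℝ) * ‖w - 1‖ ≤ n * ‖y - 1‖).trans h)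
      have h2 : ‖1 + 1 / (n : ℂ)‖ ≤ 2 := by
        refine (norm_add_le _ _).trans ?_
        have : 1 / (n : ℝ) ≤ 1 := by
          rw [div_le_one hn0]; exact_mod_cast hn
        simp only [norm_one, norm_div, Complex.norm_natCast]
        linarith
      calc ‖(1 + 1 / (n : ℂ)) * (1 - w ^ n)‖ ≤ 2 * (1 / 4) := by rw [norm_mul]; gcongr
        _ = 1 / 2 := by norm_num)
    (mem_closedBall_self (norm_nonneg _)) hy
  simpa [rootNewton] using key

lemma norm_iterate_rootNewton_sub_one_le {n : ℕ} (hn : 1 ≤ n) {y : ℂ}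
    (h : n * ‖y - 1‖ ≤ 1 / 5) (k : ℕ) :
    ‖(rootNewton n)^[k] y - 1‖ ≤ (1 / 2) ^ k * ‖y - 1‖ := by
  induction k with
  | zero => simp
  | succ k ih =>
    rw [Function.iterate_succ_apply']
    have h1 : (1 / 2 : ℝ) ^ k * ‖y - 1‖ ≤ ‖y - 1‖ :=
      mul_le_of_le_one_left (norm_nonneg _) (pow_le_one₀ (by norm_num) (by norm_num))
    refine (norm_rootNewton_sub_one_le hn ?_).trans ?_
    · exact (by gcongr; exact ih.trans h1 : _ ≤ (n : ℝ) * ‖y - 1‖).trans h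
    · calc _ ≤ 1 / 2 * ((1 / 2) ^ k * ‖y - 1‖) := by gcongr
        _ = _ := by ring

lemma iterate_rootNewton_mul {n : ℕ} {ζ : ℂ} (hζ : ζ ^ n = 1) (k : ℕ) (y : ℂ) :
    (rootNewton n)^[k] (ζ * y) = ζ * (rootNewton n)^[k] y := by
  have hs : Function.Semiconj (fun y : ℂ => ζ * y) (rootNewton n) (rootNewton n) := fun y => by
    simp only [rootNewton, mul_pow, hζ]; ring
  exact ((hs.iterate_right k).eq y).symm

lemma differentiable_smoothStep : Differentiable ℂ smoothStep := by
  unfold smoothStep; fun_prop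

lemma differentiable_rootNewton (n : ℕ) : Differentiable ℂ (rootNewton n) := by
  unfold rootNewton; fun_prop

/-! ### Prescribing values on discs along circles -/

/-- Uniform continuity of `(t, w) ↦ eᵗ f(w)` on a compact set, at `t = 0`. -/
lemma exists_close (f : ℂ → ℂ) (hf : Continuous f) (l ε : ℝ) (hε : 0 < ε) :
    ∃ δ : ℝ, 0 < δ ∧ δ ≤ 1 ∧ ∀ (t : ℝ) (v z : ℂ), |t| ≤ δ → ‖v‖ ≤ δ → ‖z‖ ≤ l →
      ‖(Real.exp t : ℂ) * f (z + v) - f z‖ < ε := by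
  have hF : Continuous (fun q : ℝ × ℂ => (Real.exp q.1 : ℂ) * f q.2) := by fun_prop
  have hK : IsCompact (Icc (-1 : ℝ) 1 ×ˢ closedBall (0 : ℂ) (l + 1)) :=
    isCompact_Icc.prod (isCompact_closedBall _ _)
  have hu := hK.uniformContinuousOn_of_continuous hF.continuousOn
  rw [Metric.uniformContinuousOn_iff] at hu
  obtain ⟨δ, hδ, H⟩ := hu ε hε
  refine ⟨min 1 (δ / 2), by positivity, min_le_left _ _, fun t v z ht hv hz => ?_⟩
  have ht1 := ht.trans (min_le_left _ _)
  have hv1 := hv.trans (min_le_left _ _)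
  have ht2 := ht.trans (min_le_right _ _)
  have hv2 := hv.trans (min_le_right _ _)
  have := H (t, z + v) ⟨abs_le.1 ht1, by
      rw [mem_closedBall_zero_iff]; exact (norm_add_le _ _).trans (by linarith)⟩ (0, z)
    ⟨by simp, by rw [mem_closedBall_zero_iff]; linarith⟩ (by
      rw [Prod.dist_eq, max_lt_iff]
      constructor
      · simp only [Real.dist_eq, sub_zero]; linarith
      · simp only [dist_eq_norm, add_sub_cancel_left]; linarith)
  simpa [dist_eq_norm] using this

lemma exists_bound (g : ℂ → ℂ) (hg : Continuous g) (r : ℝ) :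
    ∃ B : ℝ, 0 < B ∧ ∀ z, ‖z‖ ≤ r → ‖g z‖ ≤ B := by
  obtain ⟨B, hB⟩ := (isCompact_closedBall (0 : ℂ) r).exists_bound_of_continuousOn hg.continuousOn
  exact ⟨max B 1, by positivity, fun z hz => (hB z (by simpa using hz)).trans (le_max_left _ _)⟩

/-- One circle of translation targets. An entire `y` can be corrected, almost without change on
`|z| ≤ ρ`, so that it is close to `β f(· - s e ζ)` on the disc of radius `L` around `s e ζ`, for all
`n`-th roots of unity `ζ` at once. The bounds say that `z ↦ (z / (s e)) ^ n` sends the small disc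
into the disc of radius `1/4` around `0` and the `n` target discs into that around `1`. -/
lemma exists_entire_step (y f : ℂ → ℂ) (hy : Differentiable ℂ y) (hf : Differentiable ℂ f)
    (L s ρ η : ℝ) (hs : 0 < s) (hη : 0 < η) (n : ℕ) (hn : 1 ≤ n) (hnL : 5 * (n * L) ≤ s)
    (hρ : (ρ / s) ^ n ≤ 1 / 4) (e β : ℂ) (he : ‖e‖ = 1) :
    ∃ h : ℂ → ℂ, Differentiable ℂ h ∧ (∀ z, ‖z‖ ≤ ρ → ‖h z - y z‖ < η) ∧
      ∀ ζ : ℂ, ζ ^ n = 1 → ∀ z, ‖z‖ ≤ L → ‖h (z + s * (e * ζ)) - β * f z‖ < η := by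
  have he0 : e ≠ 0 := by rintro rfl; simp at he
  have hsc : (s : ℂ) ≠ 0 := by exact_mod_cast hs.ne'
  have hn0 : (0 : ℝ) < n := by exact_mod_cast hn
  obtain ⟨δ, hδ, -, Hδ⟩ := exists_close f hf.continuous L (η / (2 * (‖β‖ + 1))) (by positivity)
  obtain ⟨k, hk⟩ : ∃ k : ℕ, (1 / 2 : ℝ) ^ k < δ / s :=
    exists_pow_lt_of_lt_one (by positivity) (by norm_num)
  set w : ℂ → ℂ := fun z => z / (s * e) with hw
  set g : ℂ → ℂ := fun z => β * f (z - s * e * (rootNewton n)^[k] (w z)) with hg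
  have hwd : Differentiable ℂ w := by rw [hw]; fun_prop
  have hgd : Differentiable ℂ g := by
    have h1 : Differentiable ℂ (fun z => (rootNewton n)^[k] (w z)) :=
      ((differentiable_rootNewton n).iterate k).comp hwd
    exact (hf.comp (differentiable_id.sub (h1.const_mul _))).const_mul _
  obtain ⟨B, hB, HB⟩ := exists_bound (fun z => g z - y z) (hgd.sub hy).continuous (max ρ (s + L))
  obtain ⟨j, hj⟩ : ∃ j : ℕ, (7 / 8 : ℝ) ^ j < η / (2 * B) :=
    exists_pow_lt_of_lt_one (by positivity) (by norm_num)
  have hj' : (7 / 8 : ℝ) ^ j * (1 / 4) * B < η / 2 := by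
    rw [lt_div_iff₀ (by positivity)] at hj
    have : 0 < (7 / 8 : ℝ) ^ j * B := by positivity
    linarith
  have hχd : Differentiable ℂ (fun z => smoothStep^[j] (w z ^ n)) :=
    (differentiable_smoothStep.iterate j).comp (hwd.pow n)
  have hwn : ∀ z, ‖w z‖ = ‖z‖ / s := fun z => by
    simp [hw, he, abs_of_pos hs]
  refine ⟨fun z => y z + smoothStep^[j] (w z ^ n) * (g z - y z),
    hy.add (hχd.mul (hgd.sub hy)), fun z hz => ?_, fun ζ hζ z hz => ?_⟩
  · have h1 : ‖w z ^ n‖ ≤ 1 / 4 := by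
      rw [norm_pow, hwn]
      exact (by gcongr : (‖z‖ / s) ^ n ≤ (ρ / s) ^ n).trans hρ
    rw [add_sub_cancel_left, norm_mul]
    calc _ ≤ (7 / 8 : ℝ) ^ j * (1 / 4) * B := by
          gcongr
          · exact norm_iterate_smoothStep_le h1 j
          · exact HB z (hz.trans (le_max_left _ _))
      _ < η := by linarith
  · have hζ1 : ‖ζ‖ = 1 := by
      have := congrArg norm hζ
      rw [norm_pow, norm_one] at this
      exact (pow_eq_one_iff_of_nonneg (norm_nonneg _) (by omega)).1 this
    have hζ0 : ζ ≠ 0 := by rintro rfl; simp at hζ1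
    set z' := z + s * (e * ζ) with hz'
    set u : ℂ := 1 + z / (s * (e * ζ)) with hu
    have hwz : w z' = ζ * u := by
      simp only [hw, hz', hu]; field_simp; ring
    have hu1 : ‖u - 1‖ = ‖z‖ / s := by
      simp [hu, he, hζ1, abs_of_pos hs]
    have hnu : n * ‖u - 1‖ ≤ 1 / 5 := by
      rw [hu1, ← mul_div_assoc, div_le_iff₀ hs]
      have : (n : ℝ) * ‖z‖ ≤ n * L := by gcongr
      linarith
    have hχ : ‖smoothStep^[j] (w z' ^ n) - 1‖ ≤ (7 / 8 : ℝ) ^ j * (1 / 4) := by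
      apply norm_iterate_smoothStep_sub_one_le
      rw [hwz, mul_pow, hζ, one_mul]
      exact norm_one_sub_pow_le hnu
    have hg1 : ‖g z' - β * f z‖ ≤ η / 2 := by
      set v : ℂ := s * (e * ζ) * (1 - (rootNewton n)^[k] u) with hv
      have e1 : z' - s * e * (rootNewton n)^[k] (w z') = z + v := by
        rw [hwz, iterate_rootNewton_mul hζ, hv, hz']; ring
      have hv1 : ‖v‖ ≤ δ := by
        have h1 := norm_iterate_rootNewton_sub_one_le hn hnu k
        have h2 : ‖u - 1‖ ≤ 1 := by
          have : (1 : ℝ) ≤ n := by exact_mod_cast hn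
          nlinarith [norm_nonneg (u - 1)]
        have h3 : ‖(rootNewton n)^[k] u - 1‖ ≤ δ / s :=
          h1.trans ((mul_le_of_le_one_right (by positivity) h2).trans hk.le)
        rw [hv, norm_mul, norm_mul, norm_mul, he, hζ1, norm_sub_rev, Complex.norm_real,
          Real.norm_of_nonneg hs.le]
        calc s * (1 * 1) * ‖(rootNewton n)^[k] u - 1‖ ≤ s * (1 * 1) * (δ / s) := by gcongr
          _ = δ := by field_simp
      have h4 := Hδ 0 v z (by simpa using hδ.le) hv1 hz
      simp only [Real.exp_zero, Complex.ofReal_one, one_mul] at h4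
      simp only [hg, e1]
      rw [← mul_sub, norm_mul]
      calc ‖β‖ * ‖f (z + v) - f z‖ ≤ (‖β‖ + 1) * (η / (2 * (‖β‖ + 1))) := by
            gcongr; linarith
        _ = η / 2 := by field_simp
    have hzn : ‖z'‖ ≤ s + L := by
      refine (norm_add_le _ _).trans ?_
      rw [norm_mul, norm_mul, he, hζ1, Complex.norm_real, Real.norm_of_nonneg hs.le]
      linarith
    have e2 : y z' + smoothStep^[j] (w z' ^ n) * (g z' - y z') - β * f z
        = (g z' - β * f z) + (smoothStep^[j] (w z' ^ n) - 1) * (g z' - y z') := by ring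
    calc _ ≤ ‖g z' - β * f z‖ + ‖smoothStep^[j] (w z' ^ n) - 1‖ * ‖g z' - y z'‖ := by
          simp only [e2]
          exact (norm_add_le _ _).trans (by rw [norm_mul])
      _ ≤ η / 2 + (7 / 8 : ℝ) ^ j * (1 / 4) * B := by
          gcongr
          exact HB z' (hzn.trans (le_max_right _ _))
      _ < η := by linarith

/-- Successive corrections on the circles of radius `s 0 < s 1 < ⋯`: each one is negligible on the
disc containing all the targets treated before. -/
lemma exists_entire_iter (y f : ℂ → ℂ) (hy : Differentiable ℂ y) (hf : Differentiable ℂ f)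
    (L R : ℝ) (hL : 0 < L) (hR : 0 ≤ R) (s : ℕ → ℝ) (n : ℕ → ℕ) (e β : ℕ → ℂ)
    (hs0 : R + 19 * L ≤ s 0) (hs1 : ∀ u, s u + 20 * L ≤ s (u + 1)) (hn : ∀ u, 1 ≤ n u)
    (hn1 : ∀ u, 5 * (n u * L) ≤ s u) (hn2 : ∀ u, s u ≤ 10 * (n u * L)) (he : ∀ u, ‖e u‖ = 1)
    (T : ℕ) : ∀ η : ℝ, 0 < η →
    ∃ x : ℂ → ℂ, Differentiable ℂ x ∧ (∀ z, ‖z‖ ≤ R → ‖x z - y z‖ < η) ∧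
      ∀ u < T, ∀ ζ : ℂ, ζ ^ n u = 1 → ∀ z, ‖z‖ ≤ L →
        ‖x (z + s u * (e u * ζ)) - β u * f z‖ < η := by
  have hmono : Monotone s := monotone_nat_of_le_succ fun u => by linarith [hs1 u]
  induction T with
  | zero => exact fun η hη => ⟨y, hy, by simpa using fun _ _ => hη, by simp⟩
  | succ T ih =>
    intro η hη
    obtain ⟨x, hx, hxR, hxu⟩ := ih (η / 2) (by positivity)
    have hsT : R + 19 * L ≤ s T := hs0.trans (hmono (Nat.zero_le T))
    have hspos : 0 < s T := by linarith
    have hρ : ((s T - 19 * L) / s T) ^ n T ≤ 1 / 4 := by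
      have h1 : (s T - 19 * L) / s T ≤ Real.exp (-(19 * L / s T)) := by
        have := Real.add_one_le_exp (-(19 * L / s T))
        rw [sub_div, div_self hspos.ne']
        linarith
      have h2 : (19 : ℝ) / 10 ≤ n T * (19 * L / s T) := by
        rw [← mul_div_assoc, div_le_div_iff₀ (by norm_num) hspos]
        linarith [hn2 T]
      have h3 : Real.exp (-(19 / 10)) ≤ 1 / 4 := by
        have := Real.quadratic_le_exp_of_nonneg (x := 19 / 10) (by norm_num)
        rw [Real.exp_neg, one_div]
        exact inv_anti₀ (by norm_num) (by linarith)
      calc _ ≤ Real.exp (-(19 * L / s T)) ^ n T := by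
            have : 0 ≤ s T - 19 * L := by linarith
            gcongr
        _ = Real.exp (-(n T * (19 * L / s T))) := by rw [← Real.exp_nat_mul]; ring_nf
        _ ≤ Real.exp (-(19 / 10)) := by gcongr
        _ ≤ 1 / 4 := h3
    obtain ⟨h, hh, hhρ, hhT⟩ := exists_entire_step x f hx hf L (s T) (s T - 19 * L) (η / 2) hspos
      (by positivity) (n T) (hn T) (hn1 T) hρ (e T) (β T) (he T)
    refine ⟨h, hh, fun z hz => ?_, fun u hu ζ hζ z hz => ?_⟩
    · have h1 := hhρ z (by linarith)
      have h2 := hxR z hz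
      calc ‖h z - y z‖ = ‖(h z - x z) + (x z - y z)‖ := by congr 1; ring
        _ ≤ _ := norm_add_le _ _
        _ < η := by linarith
    · rcases Nat.lt_succ_iff_lt_or_eq.1 hu with hu | rfl
      · have hζ1 : ‖ζ‖ = 1 := by
          have := congrArg norm hζ
          rw [norm_pow, norm_one] at this
          exact (pow_eq_one_iff_of_nonneg (norm_nonneg _) (by have := hn u; omega)).1 this
        have hsu : s u + 20 * L ≤ s T := (hs1 u).trans (hmono hu)
        have hsu0 : 0 ≤ s u := by
          have := hmono (Nat.zero_le u); linarith
        have h1 := hhρ (z + s u * (e u * ζ)) (by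
          refine (norm_add_le _ _).trans ?_
          rw [norm_mul, norm_mul, he, hζ1, Complex.norm_real, Real.norm_of_nonneg hsu0]
          linarith)
        have h2 := hxu u hu ζ hζ z hz
        set z' := z + s u * (e u * ζ)
        calc ‖h z' - β u * f z‖ = ‖(h z' - x z') + (x z' - β u * f z)‖ := by congr 1; ring
          _ ≤ _ := norm_add_le _ _
          _ < η := by linarith
      · exact (hhT ζ hζ z hz).trans (by linarith)

/-! ### Covering the parameters -/

/-- The nodes `-B + c log (i / N)`, `i ≥ N`. They start at `-B`, the step from `i` to `i + 1` is at
most `c / i`, and they pass `B` for `i` about `N e ^ (2B / c)`, a constant multiple of `N`. -/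
noncomputable def logNode (B c : ℝ) (N i : ℕ) : ℝ := -B + c * Real.log (i / N)

lemma neg_le_logNode {c B : ℝ} (hc : 0 ≤ c) {N i : ℕ} (hN : 1 ≤ N) (hi : N ≤ i) :
    -B ≤ logNode B c N i := by
  have hN0 : (0 : ℝ) < N := by exact_mod_cast hN
  have : 0 ≤ Real.log (i / N) := Real.log_nonneg (by
    rw [le_div_iff₀ hN0, one_mul]; exact_mod_cast hi)
  unfold logNode
  nlinarith

lemma logNode_mono {c B : ℝ} (hc : 0 ≤ c) {N i j : ℕ} (hN : 1 ≤ N) (hi : N ≤ i) (hij : i ≤ j) :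
    logNode B c N i ≤ logNode B c N j := by
  have hN0 : (0 : ℝ) < N := by exact_mod_cast hN
  have hi0 : (0 : ℝ) < i := by exact_mod_cast hN.trans hi
  unfold logNode
  gcongr

lemma exists_logNode {N : ℕ} (hN : 1 ≤ N) {c : ℝ} (hc : 0 < c) {B b : ℝ} (h1 : -B ≤ b) (h2 : b ≤ B) :
    ∃ i : ℕ, N ≤ i ∧ (i : ℝ) ≤ N * Real.exp (2 * B / c) ∧ logNode B c N i ≤ b ∧
      b ≤ logNode B c N i + c / i := by
  have hN0 : (0 : ℝ) < N := by exact_mod_cast hN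
  set X : ℝ := N * Real.exp ((b + B) / c) with hX
  have hX0 : 0 < X := by positivity
  have hNX : (N : ℝ) ≤ X := by
    have : 1 ≤ Real.exp ((b + B) / c) := Real.one_le_exp (div_nonneg (by linarith) hc.le)
    nlinarith
  have hlog : Real.log (X / N) = (b + B) / c := by
    rw [hX, mul_div_cancel_left₀ _ hN0.ne', Real.log_exp]
  have hiN : N ≤ ⌊X⌋₊ := Nat.le_floor hNX
  have hi0 : (0 : ℝ) < ⌊X⌋₊ := by exact_mod_cast (lt_of_lt_of_le hN hiN)
  have hiX : (⌊X⌋₊ : ℝ) ≤ X := Nat.floor_le hX0.le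
  have hXi : X < ⌊X⌋₊ + 1 := Nat.lt_floor_add_one X
  refine ⟨⌊X⌋₊, hiN, hiX.trans ?_, ?_, ?_⟩
  · rw [hX]; gcongr; linarith
  · have : Real.log (⌊X⌋₊ / N) ≤ (b + B) / c := by rw [← hlog]; gcongr
    rw [le_div_iff₀ hc] at this
    unfold logNode; linarith
  · have h3 : (b + B) / c - Real.log (⌊X⌋₊ / N) ≤ 1 / ⌊X⌋₊ := by
      rw [← hlog, ← Real.log_div (by positivity) (by positivity), div_div_div_cancel_right₀ hN0.ne']
      refine (Real.log_le_sub_one_of_pos (by positivity)).trans ?_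
      rw [div_sub_one hi0.ne']
      gcongr
      linarith
    have h4 : (b + B) / c ≤ Real.log (⌊X⌋₊ / N) + 1 / ⌊X⌋₊ := by linarith
    rw [div_le_iff₀ hc] at h4
    unfold logNode
    have : (Real.log (⌊X⌋₊ / N) + 1 / ⌊X⌋₊) * c = c * Real.log (⌊X⌋₊ / N) + c / ⌊X⌋₊ := by ring
    linarith

/-- Every point of the unit circle is within `2π / (n M)` of one of the `n M`-th roots of unity,
written as one of `M` fixed offsets times an `n`-th root of unity. -/
lemma exists_circle_net {n M : ℕ} (hn : 1 ≤ n) (hM : 1 ≤ M) {a : ℂ} (ha : ‖a‖ = 1) :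
    ∃ r < M, ∃ ζ : ℂ, ζ ^ n = 1 ∧
      ‖a - Complex.exp (Complex.I * (2 * Real.pi * r / (n * M) : ℝ)) * ζ‖
        ≤ 2 * Real.pi / (n * M) := by
  have hn0 : (0 : ℝ) < n := by exact_mod_cast hn
  have hM0 : (0 : ℝ) < M := by exact_mod_cast hM
  have hnc : (n : ℂ) ≠ 0 := by exact_mod_cast hn0.ne'
  have hMc : (M : ℂ) ≠ 0 := by exact_mod_cast hM0.ne'
  have hpi := Real.pi_pos
  set q : ℝ := 2 * Real.pi / (n * M) with hq
  have hq0 : 0 < q := by positivity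
  set α := a.arg
  have haα : a = Complex.exp (Complex.I * α) := by
    have := Complex.norm_mul_exp_arg_mul_I a
    rw [ha, Complex.ofReal_one, one_mul, mul_comm] at this
    exact this.symm
  set J : ℤ := ⌊α / q⌋ with hJ
  have hMz : (M : ℤ) ≠ 0 := by omega
  obtain ⟨r, hr⟩ : ∃ r : ℕ, (r : ℤ) = J % M := ⟨(J % M).toNat, Int.toNat_of_nonneg (Int.emod_nonneg _ hMz)⟩
  have hrM : r < M := by
    have := Int.emod_lt_of_pos J (b := (M : ℤ)) (by omega)
    omega
  have hJr : (J : ℂ) = r + M * (J / M : ℤ) := by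
    have := Int.emod_add_mul_ediv J M
    rw [← hr] at this
    exact_mod_cast this.symm
  refine ⟨r, hrM, Complex.exp (2 * Real.pi * Complex.I * (J / M : ℤ) / n), ?_, ?_⟩
  · rw [← Complex.exp_nat_mul, mul_div_cancel₀ _ hnc, mul_comm]
    exact Complex.exp_int_mul_two_pi_mul_I _
  · have e1 : Complex.exp (Complex.I * (2 * Real.pi * r / (n * M) : ℝ)) *
        Complex.exp (2 * Real.pi * Complex.I * (J / M : ℤ) / n)
        = Complex.exp (Complex.I * (q * J : ℝ)) := by
      rw [← Complex.exp_add]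
      congr 1
      push_cast [hq]
      rw [hJr]
      field_simp
    have e2 : a = Complex.exp (Complex.I * (q * J : ℝ)) *
        Complex.exp (Complex.I * (α - q * J : ℝ)) := by
      rw [← Complex.exp_add, haα]
      congr 1
      push_cast
      ring
    rw [e1]
    nth_rw 1 [e2]
    rw [← mul_sub_one, norm_mul, mul_comm Complex.I ((q * J : ℝ) : ℂ),
      Complex.norm_exp_ofReal_mul_I, one_mul]
    refine Real.norm_exp_I_mul_ofReal_sub_one_le.trans ?_
    have h1 : (J : ℝ) ≤ α / q := Int.floor_le _
    have h2 : α / q < J + 1 := Int.lt_floor_add_one _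
    rw [le_div_iff₀ hq0] at h1
    rw [div_lt_iff₀ hq0] at h2
    rw [Real.norm_of_nonneg (by linarith)]
    linarith

/-! ### Iterated antiderivatives of polynomials -/

/-- The `g`-fold antiderivative of `p` whose derivatives of order `< g` vanish at `0`. -/
noncomputable def antideriv (g : ℕ) (p : Polynomial ℂ) : Polynomial ℂ :=
  ∑ k ∈ Finset.range (p.natDegree + 1),
    Polynomial.C (p.coeff k * (k.factorial / (k + g).factorial)) * Polynomial.X ^ (k + g)

lemma antideriv_zero (p : Polynomial ℂ) : antideriv 0 p = p := by
  conv_rhs => rw [p.as_sum_range_C_mul_X_pow]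
  refine Finset.sum_congr rfl fun k _ => ?_
  have : ((k.factorial : ℕ) : ℂ) ≠ 0 := by exact_mod_cast k.factorial_ne_zero
  simp [div_self this]

lemma derivative_antideriv_succ (g : ℕ) (p : Polynomial ℂ) :
    Polynomial.derivative (antideriv (g + 1) p) = antideriv g p := by
  unfold antideriv
  rw [Polynomial.derivative_sum]
  refine Finset.sum_congr rfl fun k _ => ?_
  rw [Polynomial.derivative_C_mul_X_pow, ← add_assoc, add_tsub_cancel_right]
  congr 2
  have h1 : (((k + g).factorial : ℕ) : ℂ) ≠ 0 := by exact_mod_cast (k + g).factorial_ne_zero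
  have h2 : ((k + g : ℕ) : ℂ) + 1 ≠ 0 := by exact_mod_cast (k + g).succ_ne_zero
  rw [Nat.factorial_succ]
  push_cast at h2 ⊢
  field_simp

lemma iterate_derivative_antideriv_add (s g : ℕ) (p : Polynomial ℂ) :
    Polynomial.derivative^[s] (antideriv (s + g) p) = antideriv g p := by
  induction s with
  | zero => simp
  | succ s ih =>
    rw [Function.iterate_succ_apply, show s + 1 + g = s + g + 1 by omega,
      derivative_antideriv_succ, ih]

lemma iterate_derivative_antideriv_eq_zero {s g : ℕ} {p : Polynomial ℂ} (h : g + p.natDegree < s) :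
    Polynomial.derivative^[s] (antideriv g p) = 0 := by
  obtain ⟨r, rfl⟩ : ∃ r, s = r + g := ⟨s - g, by omega⟩
  have := iterate_derivative_antideriv_add g 0 p
  rw [add_zero, antideriv_zero] at this
  rw [Function.iterate_add_apply, this]
  exact Polynomial.iterate_derivative_eq_zero (by omega)

/-- The decay `l ^ g / g!` comes from `k! / (k + g)! ≤ 1 / g!`. -/
lemma norm_eval_antideriv_le (g : ℕ) (p : Polynomial ℂ) {l : ℝ} {z : ℂ} (hz : ‖z‖ ≤ l) :
    ‖(antideriv g p).eval z‖ ≤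
      (∑ k ∈ Finset.range (p.natDegree + 1), ‖p.coeff k‖ * l ^ k) * (l ^ g / g.factorial) := by
  have hl : 0 ≤ l := (norm_nonneg z).trans hz
  unfold antideriv
  rw [Polynomial.eval_finsetSum, Finset.sum_mul]
  refine (norm_sum_le _ _).trans (Finset.sum_le_sum fun k _ => ?_)
  have h1 : ((k.factorial : ℝ) / (k + g).factorial) ≤ 1 / g.factorial := by
    rw [div_le_div_iff₀ (by positivity) (by positivity), one_mul]
    exact_mod_cast Nat.le_of_dvd (Nat.factorial_pos _) (Nat.factorial_mul_factorial_dvd_factorial_add k g)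
  simp only [Polynomial.eval_mul, Polynomial.eval_C, Polynomial.eval_pow, Polynomial.eval_X,
    norm_mul, norm_div, norm_pow, Complex.norm_natCast]
  calc _ ≤ ‖p.coeff k‖ * (1 / g.factorial) * l ^ (k + g) := by gcongr
    _ = _ := by rw [pow_add]; ring

lemma deriv_iterate_eval (p : Polynomial ℂ) (s : ℕ) :
    deriv^[s] (fun z => p.eval z) = fun z => (Polynomial.derivative^[s] p).eval z := by
  induction s with
  | zero => rfl
  | succ s ih =>
    rw [Function.iterate_succ_apply', ih, Function.iterate_succ_apply']
    funext z
    exact Polynomial.deriv _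

/-- Taylor polynomials approximate an entire function on discs. -/
lemma exists_polynomial_near (f : ℂ → ℂ) (hf : Differentiable ℂ f) (l : ℕ) {ε : ℝ} (hε : 0 < ε) :
    ∃ p : Polynomial ℂ, ∀ z : ℂ, ‖z‖ ≤ l → ‖p.eval z - f z‖ ≤ ε := by
  have h := hf.hasFPowerSeriesOnBall 0 (R := 1) one_pos
  have hu := h.tendstoUniformlyOn (r' := (l : NNReal) + 1) (by simp)
  rw [Metric.tendstoUniformlyOn_iff] at hu
  obtain ⟨N, hN⟩ := (hu ε hε).exists
  refine ⟨∑ k ∈ Finset.range N, Polynomial.C ((cauchyPowerSeries f 0 (1 : NNReal)).coeff k) *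
    Polynomial.X ^ k, fun z hz => ?_⟩
  have := hN z (by
    rw [mem_ball_zero_iff]; push_cast; linarith)
  rw [dist_comm, dist_eq_norm, zero_add] at this
  refine le_of_eq_of_le ?_ this.le
  congr 2
  simp only [FormalMultilinearSeries.partialSum, FormalMultilinearSeries.apply_eq_prod_smul_coeff,
    Polynomial.eval_finsetSum, Polynomial.eval_mul, Polynomial.eval_C, Polynomial.eval_pow,
    Polynomial.eval_X, Finset.prod_const, Finset.card_univ, Fintype.card_fin, smul_eq_mul]
  exact Finset.sum_congr rfl fun k _ => mul_comm _ _

lemma sum_pow_div_factorial_le {q : ℝ} (hq : 0 ≤ q) {G : ℕ} (hG : 1 ≤ G) (i I : ℕ) :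
    ∑ j ∈ Finset.Ioc i I, q ^ (G * (j - i)) / (G * (j - i)).factorial
      ≤ Real.exp (2 * q) * (2 * (1 / 2) ^ G) := by
  have hterm : ∀ g : ℕ, q ^ g / g.factorial ≤ Real.exp (2 * q) * (1 / 2) ^ g := fun g => by
    have := Real.pow_div_factorial_le_exp (2 * q) (by positivity) g
    rw [mul_pow] at this
    calc q ^ g / g.factorial = (2 ^ g * q ^ g / g.factorial) * (1 / 2) ^ g := by
          rw [div_pow, one_pow]; field_simp
      _ ≤ _ := by gcongr
  have hgeo : ∑ m ∈ Finset.range (I - i), (1 / 2 : ℝ) ^ m ≤ 2 := by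
    simpa using sum_geometric_two_le (I - i)
  calc _ ≤ ∑ j ∈ Finset.Ioc i I, Real.exp (2 * q) * ((1 / 2) ^ G * (1 / 2) ^ (j - i - 1)) := by
        refine Finset.sum_le_sum fun j hj => (hterm _).trans ?_
        rw [Finset.mem_Ioc] at hj
        rw [← pow_add]
        gcongr ?_ * ?_
        refine pow_le_pow_of_le_one (by norm_num) (by norm_num) ?_
        obtain ⟨d, hd⟩ : ∃ d, j - i = d + 1 := ⟨j - i - 1, by omega⟩
        rw [hd, Nat.add_sub_cancel]
        nlinarith
    _ = Real.exp (2 * q) * ((1 / 2) ^ G * ∑ m ∈ Finset.range (I - i), (1 / 2 : ℝ) ^ m) := by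
        rw [← Finset.mul_sum, ← Finset.mul_sum]
        congr 2
        refine Finset.sum_nbij' (fun j => j - i - 1) (fun m => m + i + 1) ?_ ?_ ?_ ?_ ?_ <;>
          simp only [Finset.mem_Ioc, Finset.mem_range] <;> intros <;> first | omega | trivial
    _ ≤ Real.exp (2 * q) * ((1 / 2) ^ G * 2) := by gcongr
    _ = _ := by ring

/-! ### The two types of blocks -/

/-- The block for `D`. With `s_j = G j`, nodes `b_j` and a polynomial `p` near `f`, the function is
`∑ e ^ (-b_j s_j) J ^ (s_j) p`, `J` being integration from `0`. Applying `e ^ (b s_i) D ^ (s_i)`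
for `b` just above `b_i` kills the terms `j < i` and leaves nearly `p` from `j = i`; the terms
`j > i` are small because the nodes increase. -/
lemma exists_derivative_block (f : ℂ → ℂ) (hf : Differentiable ℂ f) (l nn : ℕ) (ε : ℝ)
    (hε : 0 < ε) :
    ∃ N₀ : ℕ, ∀ N, N₀ ≤ N → ∃ x : ℂ → ℂ, Differentiable ℂ x ∧ (∀ z, ‖z‖ ≤ l → ‖x z‖ ≤ ε) ∧
      ∀ b : ℝ, -(nn : ℝ) ≤ b → b ≤ nn → ∃ s : ℕ, N ≤ s ∧ s ≤ N + N ^ 2 ∧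
        ∀ z, ‖z‖ ≤ l → ‖(Real.exp (b * s) : ℂ) * (deriv^[s] x) z - f z‖ ≤ ε := by
  obtain ⟨p, hp⟩ := exists_polynomial_near f hf l (ε := ε / 4) (by positivity)
  obtain ⟨δ, hδ, hδ1, Hδ⟩ := exists_close (fun z => p.eval z) p.continuous l (ε / 4) (by positivity)
  set A : ℝ := ∑ k ∈ Finset.range (p.natDegree + 1), ‖p.coeff k‖ * (l : ℝ) ^ k with hA
  have hA0 : 0 ≤ A := by positivity
  set q : ℝ := Real.exp nn * l with hq
  have hq0 : 0 ≤ q := by positivity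
  obtain ⟨G₀, hG₀⟩ : ∃ G₀ : ℕ, (1 / 2 : ℝ) ^ G₀ <
      ε / (4 * (Real.exp 1 * (A + 1) * Real.exp (2 * q))) :=
    exists_pow_lt_of_lt_one (by positivity) (by norm_num)
  set G := G₀ + p.natDegree + 1 with hG
  have hGpos : (0 : ℝ) < G := by exact_mod_cast Nat.succ_pos _
  have htail : ∀ i I : ℕ, Real.exp 1 * A *
      ∑ j ∈ Finset.Ioc i I, q ^ (G * (j - i)) / (G * (j - i)).factorial ≤ ε / 2 := fun i I => by
    have h1 := sum_pow_div_factorial_le hq0 (show 1 ≤ G by omega) i I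
    have h2 : (1 / 2 : ℝ) ^ G ≤ (1 / 2) ^ G₀ :=
      pow_le_pow_of_le_one (by norm_num) (by norm_num) (by omega)
    rw [lt_div_iff₀ (by positivity)] at hG₀
    calc _ ≤ Real.exp 1 * (A + 1) * (Real.exp (2 * q) * (2 * (1 / 2) ^ G₀)) := by
          gcongr
          · linarith
          · exact h1.trans (by gcongr)
      _ ≤ ε / 2 := by linarith
  have hterm : ∀ (c' : ℝ) (g : ℕ), c' ≤ 1 + nn * g → ∀ z : ℂ, ‖z‖ ≤ l →
      ‖(Real.exp c' : ℂ) * (antideriv g p).eval z‖ ≤ Real.exp 1 * A * (q ^ g / g.factorial) := by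
    intro c' g hc' z hz
    have h1 := norm_eval_antideriv_le g p hz
    rw [norm_mul, Complex.norm_real, Real.norm_of_nonneg (Real.exp_pos _).le]
    calc _ ≤ Real.exp (1 + nn * g) * (A * ((l : ℝ) ^ g / g.factorial)) := by gcongr
      _ = _ := by
        rw [Real.exp_add, mul_comm (nn : ℝ), Real.exp_nat_mul, hq, mul_pow]; ring
  set c : ℝ := δ / G with hc
  have hc0 : 0 < c := by positivity
  refine ⟨⌈G * Real.exp (2 * nn / c)⌉₊ + 1, fun N hN => ?_⟩
  have hN1 : 1 ≤ N := by omega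
  have hNE : G * Real.exp (2 * nn / c) ≤ N := by
    refine (Nat.le_ceil _).trans ?_
    exact_mod_cast (by omega : ⌈G * Real.exp (2 * nn / c)⌉₊ ≤ N)
  have hN0 : (0 : ℝ) < N := by exact_mod_cast hN1
  set I := ⌊N * Real.exp (2 * nn / c)⌋₊ with hI
  set bb : ℕ → ℝ := fun j => logNode nn c N j with hbb
  set P : Polynomial ℂ := ∑ j ∈ Finset.Icc N I,
    Polynomial.C (Real.exp (-(bb j * (G * j : ℕ))) : ℂ) * antideriv (G * j) p with hP
  refine ⟨fun z => P.eval z, P.differentiable, fun z hz => ?_, fun b hb1 hb2 => ?_⟩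
  · simp only [hP, Polynomial.eval_finsetSum, Polynomial.eval_mul, Polynomial.eval_C]
    calc _ ≤ ∑ j ∈ Finset.Icc N I, Real.exp 1 * A * (q ^ (G * j) / (G * j).factorial) := by
          refine (norm_sum_le _ _).trans (Finset.sum_le_sum fun j hj => hterm _ _ ?_ z hz)
          have h1 : -(nn : ℝ) ≤ bb j := neg_le_logNode hc0.le hN1 (Finset.mem_Icc.1 hj).1
          have h2 : (0 : ℝ) ≤ (G * j : ℕ) := Nat.cast_nonneg _
          nlinarith
      _ ≤ ∑ j ∈ Finset.Ioc 0 I, Real.exp 1 * A * (q ^ (G * j) / (G * j).factorial) := by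
          refine Finset.sum_le_sum_of_subset_of_nonneg (fun j hj => ?_) fun j _ _ => by positivity
          rw [Finset.mem_Icc] at hj
          rw [Finset.mem_Ioc]
          omega
      _ ≤ ε / 2 := by
          rw [← Finset.mul_sum]
          simpa using htail 0 I
      _ ≤ ε := by linarith
  · obtain ⟨i, hNi, hiE, hib, hbi⟩ := exists_logNode hN1 hc0 hb1 hb2
    have hiI : i ≤ I := Nat.le_floor hiE
    have hi0 : (0 : ℝ) < i := by exact_mod_cast hN1.trans hNi
    refine ⟨G * i, by nlinarith, ?_, fun z hz => ?_⟩
    · have h1 : ((G * i : ℕ) : ℝ) ≤ (N + N ^ 2 : ℕ) := by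
        push_cast
        calc (G : ℝ) * i ≤ G * (N * Real.exp (2 * nn / c)) := by gcongr
          _ = N * (G * Real.exp (2 * nn / c)) := by ring
          _ ≤ N * N := by gcongr
          _ ≤ _ := by nlinarith
      exact_mod_cast h1
    set s := G * i with hs
    have hsr : (s : ℝ) = G * i := by rw [hs]; push_cast; rfl
    set t : ℝ := (b - bb i) * s with ht
    have ht0 : 0 ≤ t := mul_nonneg (by linarith) (Nat.cast_nonneg _)
    have htδ : t ≤ δ := by
      calc t ≤ (c / i) * s := by rw [ht]; gcongr; linarith
        _ = δ := by rw [hsr, hc]; field_simp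
    have hexp : (Real.exp (b * s) : ℂ) * (deriv^[s] fun z => P.eval z) z =
        (Real.exp t : ℂ) * p.eval z + ∑ j ∈ Finset.Ioc i I,
          (Real.exp (b * s - bb j * (G * j : ℕ)) : ℂ) * (antideriv (G * (j - i)) p).eval z := by
      have hterm' : ∀ j, (Real.exp (b * s) : ℂ) * (Polynomial.derivative^[s]
          (Polynomial.C (Real.exp (-(bb j * (G * j : ℕ))) : ℂ) * antideriv (G * j) p)).eval z
          = (Real.exp (b * s - bb j * (G * j : ℕ)) : ℂ) *
            (Polynomial.derivative^[s] (antideriv (G * j) p)).eval z := fun j => by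
        rw [Polynomial.iterate_derivative_C_mul, Polynomial.eval_mul, Polynomial.eval_C,
          ← mul_assoc, ← Complex.ofReal_mul, ← Real.exp_add, sub_eq_add_neg]
      rw [deriv_iterate_eval, hP, Polynomial.iterate_derivative_sum]
      simp only [Polynomial.eval_finsetSum, Finset.mul_sum, hterm']
      have hsub : Finset.Icc i I ⊆ Finset.Icc N I := Finset.Icc_subset_Icc_left hNi
      rw [← Finset.sum_subset hsub, ← Finset.Ioc_insert_left hiI, Finset.sum_insert (by simp)]
      · congr 1
        · have h0 := iterate_derivative_antideriv_add s 0 p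
          rw [add_zero, antideriv_zero] at h0
          rw [← hs, h0, ht, sub_mul]
        · refine Finset.sum_congr rfl fun j hj => ?_
          rw [Finset.mem_Ioc] at hj
          have : G * j = s + G * (j - i) := by
            rw [hs, ← mul_add]; congr 1; omega
          rw [← iterate_derivative_antideriv_add s (G * (j - i)) p, ← this]
      · intro j hj hj'
        rw [Finset.mem_Icc] at hj hj'
        have hji : j + 1 ≤ i := by omega
        rw [iterate_derivative_antideriv_eq_zero, Polynomial.eval_zero, mul_zero]
        calc G * j + p.natDegree < G * (j + 1) := by rw [mul_add]; omega
          _ ≤ s := Nat.mul_le_mul_left _ hji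
    rw [hexp]
    have h1 : ‖(Real.exp t : ℂ) * p.eval z - p.eval z‖ ≤ ε / 4 := by
      have := Hδ t 0 z (by rw [abs_of_nonneg ht0]; exact htδ) (by simpa using hδ.le) hz
      simpa using this.le
    have h2 := hp z hz
    have h3 : ‖∑ j ∈ Finset.Ioc i I, (Real.exp (b * s - bb j * (G * j : ℕ)) : ℂ) *
        (antideriv (G * (j - i)) p).eval z‖ ≤ ε / 2 := by
      refine le_trans ?_ (htail i I)
      rw [Finset.mul_sum]
      refine (norm_sum_le _ _).trans (Finset.sum_le_sum fun j hj => hterm _ _ ?_ z hz)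
      rw [Finset.mem_Ioc] at hj
      -- The nodes increase, so the exponent grows at most like `nn` times the gap `G * (j - i)`.
      have h4 : bb i ≤ bb j := logNode_mono hc0.le hN1 hNi hj.1.le
      have h5 : -(nn : ℝ) ≤ bb j := neg_le_logNode hc0.le hN1 (hNi.trans hj.1.le)
      have h6 : ((G * (j - i) : ℕ) : ℝ) = (G * j : ℕ) - s := by
        rw [hsr]; push_cast [Nat.cast_sub hj.1.le]; ring
      have h7 : (0 : ℝ) ≤ (G * (j - i) : ℕ) := Nat.cast_nonneg _
      have h8 : 0 ≤ (bb j + nn) * ((G * (j - i) : ℕ) : ℝ) := mul_nonneg (by linarith) h7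
      have h9 : 0 ≤ (bb j - bb i) * (s : ℝ) := mul_nonneg (by linarith) (Nat.cast_nonneg _)
      rw [h6] at h8 ⊢
      have h10 : b * s - bb i * s ≤ 1 := by rw [← sub_mul]; linarith
      nlinarith
    set tail := ∑ j ∈ Finset.Ioc i I, (Real.exp (b * s - bb j * (G * j : ℕ)) : ℂ) *
        (antideriv (G * (j - i)) p).eval z
    calc _ = ‖((Real.exp t : ℂ) * p.eval z - p.eval z) + (p.eval z - f z) + tail‖ := by
          congr 1; ring
      _ ≤ ε / 4 + ε / 4 + ε / 2 := norm_add₃_le.trans (by gcongr)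
      _ = ε := by ring

set_option maxHeartbeats 1000000 in
/-- The block for all `T_a`, `|a| = 1`, as a perturbation of a prescribed entire function `y`
which is negligible on `|z| ≤ R`. The circle of index `u` has radius `s = 20 (l + 1) (M i + r)` with
`r < M`; it carries `n = 4 M i` discs, the `r`-th rotation offset and the node of index `i`, so that
`M` consecutive circles take care of all `a` for one node. -/
lemma exists_translation_block (f : ℂ → ℂ) (hf : Differentiable ℂ f) (l nn : ℕ) (ε : ℝ)
    (hε : 0 < ε) (R : ℝ) (hR : 0 ≤ R) :
    ∃ N₀ : ℕ, ∀ N, N₀ ≤ N → ∀ y : ℂ → ℂ, Differentiable ℂ y → ∀ η : ℝ, 0 < η →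
      ∃ x : ℂ → ℂ, Differentiable ℂ x ∧ (∀ z, ‖z‖ ≤ R → ‖x z - y z‖ < η) ∧
      ∀ b : ℝ, -(nn : ℝ) ≤ b → b ≤ nn → ∀ a : ℂ, ‖a‖ = 1 → ∃ s : ℕ, N ≤ s ∧ s ≤ N + N ^ 2 ∧
        ∀ z, ‖z‖ ≤ l → ‖(Real.exp (b * s) : ℂ) * x (z + (s : ℂ) * a) - f z‖ ≤ ε := by
  obtain ⟨δ, hδ, hδ1, Hδ⟩ := exists_close f hf.continuous l (ε / 2) (by positivity)
  set L : ℝ := l + 1 with hL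
  have hL0 : 0 < L := by positivity
  have hL1 : 1 ≤ L := by rw [hL]; linarith [(Nat.cast_nonneg l : (0 : ℝ) ≤ l)]
  obtain ⟨M, hM1, hM⟩ : ∃ M : ℕ, 1 ≤ M ∧ 80 * L / δ ≤ M :=
    ⟨⌈80 * L / δ⌉₊ + 1, by omega, (Nat.le_ceil _).trans (by push_cast; linarith)⟩
  have hM0 : (0 : ℝ) < M := by exact_mod_cast hM1
  have hM1' : (1 : ℝ) ≤ M := by exact_mod_cast hM1
  set c : ℝ := δ / (40 * L * M) with hc
  have hc0 : 0 < c := by positivity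
  set E := Real.exp (2 * nn / c) with hE
  refine ⟨⌈20 * L * M * (E + 1)⌉₊ + ⌈R⌉₊ + 1, fun N hN y hy η hη => ?_⟩
  have hN1 : 1 ≤ N := by omega
  have hN1' : (1 : ℝ) ≤ N := by exact_mod_cast hN1
  have hNE : 20 * L * M * (E + 1) ≤ N := by
    refine (Nat.le_ceil _).trans ?_
    exact_mod_cast (by omega : ⌈20 * L * M * (E + 1)⌉₊ ≤ N)
  have hNR : R ≤ N := by
    refine (Nat.le_ceil _).trans ?_
    exact_mod_cast (by omega : ⌈R⌉₊ ≤ N)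
  set ix : ℕ → ℕ := fun u => (M * N + u) / M with hix
  set n : ℕ → ℕ := fun u => 4 * M * ix u with hn
  have hNix : ∀ u, N ≤ ix u := fun u => by
    rw [hix]; exact (Nat.le_div_iff_mul_le (by omega)).2 (by nlinarith)
  have hixl : ∀ u, M * ix u ≤ M * N + u := fun u => Nat.mul_div_le _ _
  have hixu : ∀ u, M * N + u < M * ix u + M := fun u => by
    have := Nat.lt_mul_div_succ (M * N + u) (show 0 < M by omega)
    rw [mul_add, mul_one] at this
    exact this
  obtain ⟨x, hx, hxR, hxu⟩ := exists_entire_iter y f hy hf L R hL0 hR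
    (fun u => ((20 * (l + 1) * (M * N + u) : ℕ) : ℝ)) n
    (fun u => Complex.exp (Complex.I * (2 * Real.pi * ((M * N + u) % M : ℕ) / (n u * M) : ℝ)))
    (fun u => (Real.exp (-(logNode nn c N (ix u) * (20 * (l + 1) * (M * N + u) : ℕ))) : ℂ))
    (by
      push_cast
      rw [← hL]
      have h1 : (N : ℝ) ≤ M * N := by nlinarith
      have h2 : L ≤ L * (M * N) := by nlinarith
      have h3 : (M * N : ℝ) ≤ L * (M * N) := by nlinarith
      linarith)
    (fun u => by push_cast; rw [← hL]; linarith)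
    (fun u => by
      have := hNix u
      simp only [hn]; nlinarith)
    (fun u => by
      have h1 : ((M * ix u : ℕ) : ℝ) ≤ (M * N + u : ℕ) := by exact_mod_cast hixl u
      simp only [hn]
      push_cast at h1 ⊢
      rw [← hL]
      nlinarith)
    (fun u => by
      have h1 : M * N + u ≤ 2 * (M * ix u) := by
        have := hixu u
        have := hNix u
        nlinarith
      have h1 : ((M * N + u : ℕ) : ℝ) ≤ (2 * (M * ix u) : ℕ) := by exact_mod_cast h1
      simp only [hn]
      push_cast at h1 ⊢
      rw [← hL]
      nlinarith)
    (fun u => by rw [mul_comm, Complex.norm_exp_ofReal_mul_I])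
    (M * ⌊N * E⌋₊ + M) (min η (ε / 2 * Real.exp (-(nn * (N + N ^ 2 : ℕ))))) (by positivity)
  refine ⟨x, hx, fun z hz => (hxR z hz).trans_le (min_le_left _ _), fun b hb1 hb2 a ha => ?_⟩
  obtain ⟨i, hNi, hiE, hib, hbi⟩ := exists_logNode hN1 hc0 hb1 hb2
  have hiI : i ≤ ⌊N * E⌋₊ := Nat.le_floor hiE
  have hi0 : (0 : ℝ) < i := by exact_mod_cast hN1.trans hNi
  have hi1 : 1 ≤ i := hN1.trans hNi
  obtain ⟨r, hrM, ζ, hζ, hnet⟩ := exists_circle_net (n := 4 * M * i) (M := M)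
    (by nlinarith) hM1 ha
  obtain ⟨u, hu⟩ : ∃ u, M * N + u = M * i + r :=
    ⟨M * i + r - M * N, by have := Nat.mul_le_mul_left M hNi; omega⟩
  have hixi : ix u = i := by
    simp only [hix, hu]
    rw [Nat.mul_add_div (by omega), Nat.div_eq_of_lt hrM, add_zero]
  have hmod : (M * N + u) % M = r := by
    rw [hu, Nat.mul_add_mod, Nat.mod_eq_of_lt hrM]
  have huT : u < M * ⌊N * E⌋₊ + M := by
    have := Nat.mul_le_mul_left M hiI
    omega
  have Hx := hxu u huT ζ (by simp only [hn, hixi]; exact hζ)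
  simp only [hn, hixi, hmod] at Hx
  set s := 20 * (l + 1) * (M * N + u) with hs
  set e : ℂ := Complex.exp (Complex.I * (2 * Real.pi * r / ((4 * M * i : ℕ) * M) : ℝ)) with he
  have hsr : (s : ℝ) = 20 * L * (M * i + r) := by
    rw [hs, hu]; push_cast; rfl
  have hr' : (r : ℝ) ≤ M := by exact_mod_cast hrM.le
  have hi1' : (1 : ℝ) ≤ i := by exact_mod_cast hi1
  have hs2 : (s : ℝ) ≤ 40 * L * M * i := by
    have : (M * i + r : ℝ) ≤ 2 * (M * i) := by nlinarith
    rw [hsr]; nlinarith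
  have hsN : s ≤ N + N ^ 2 := by
    have h1 : (s : ℝ) ≤ (N + N ^ 2 : ℕ) := by
      push_cast
      calc (s : ℝ) ≤ 20 * L * (M * (N * E) + M * N) := by
            rw [hsr]
            gcongr
            nlinarith
        _ = N * (20 * L * M * (E + 1)) := by ring
        _ ≤ N * N := by gcongr
        _ ≤ _ := by nlinarith
    exact_mod_cast h1
  refine ⟨s, ?_, hsN, fun z hz => ?_⟩
  · rw [hs]
    have : N ≤ M * N := Nat.le_mul_of_pos_left _ (by omega)
    nlinarith [Nat.zero_le (l * (M * N + u))]
  set v : ℂ := s * (a - e * ζ) with hv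
  have hvδ : ‖v‖ ≤ δ := by
    rw [hv, norm_mul, Complex.norm_natCast]
    have h80 : 80 * L ≤ M * δ := by rwa [div_le_iff₀ hδ] at hM
    calc (s : ℝ) * ‖a - e * ζ‖
        ≤ (40 * L * M * i) * (2 * Real.pi / ((4 * M * i : ℕ) * M)) := by gcongr
      _ = 20 * Real.pi * L / M := by push_cast; field_simp; ring
      _ ≤ δ := by
        rw [div_le_iff₀ hM0]
        nlinarith [Real.pi_le_four]
  have hzv : ‖z + v‖ ≤ L := (norm_add_le _ _).trans (by rw [hL]; linarith)
  have h1 := (Hx (z + v) hzv).le.trans (min_le_right _ _)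
  have hpt : z + v + ((s : ℝ) : ℂ) * (e * ζ) = z + s * a := by
    rw [hv]; push_cast; ring
  rw [hpt] at h1
  set β := logNode nn c N i with hβ
  set t : ℝ := (b - β) * s with ht
  have ht0 : 0 ≤ t := mul_nonneg (by linarith) (Nat.cast_nonneg _)
  have htδ : t ≤ δ := by
    calc t ≤ (c / i) * (40 * L * M * i) := by
          rw [ht]; gcongr; linarith
      _ = δ := by rw [hc]; field_simp
  have h2 := (Hδ t v z (by rw [abs_of_nonneg ht0]; exact htδ) hvδ hz).le
  have hexp : (Real.exp (b * s) : ℂ) * (Real.exp (-(β * s)) : ℂ) = (Real.exp t : ℂ) := by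
    rw [← Complex.ofReal_mul, ← Real.exp_add, ht]; congr 2; ring
  have h3 : ‖(Real.exp (b * s) : ℂ) * (x (z + s * a) - (Real.exp (-(β * s)) : ℂ) * f (z + v))‖
      ≤ ε / 2 := by
    rw [norm_mul, Complex.norm_real, Real.norm_of_nonneg (Real.exp_pos _).le]
    calc _ ≤ Real.exp (nn * (N + N ^ 2 : ℕ)) *
          (ε / 2 * Real.exp (-(nn * (N + N ^ 2 : ℕ)))) := by
          gcongr
      _ = ε / 2 := by
          rw [mul_left_comm, ← Real.exp_add, add_neg_cancel, Real.exp_zero, mul_one]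
  calc _ = ‖(Real.exp (b * s) : ℂ) * (x (z + s * a) - (Real.exp (-(β * s)) : ℂ) * f (z + v)) +
        ((Real.exp t : ℂ) * f (z + v) - f z)‖ := by
        rw [← hexp]; congr 1; ring
    _ ≤ ε / 2 + ε / 2 := (norm_add_le _ _).trans (by gcongr)
    _ = ε := by ring

/-! ### Combining the blocks -/

lemma pnorm_le {l : ℕ} {g : ℂ → ℂ} {C : ℝ} (h : ∀ z, ‖z‖ ≤ l → ‖g z‖ ≤ C) : pnorm l g ≤ C := by
  refine csSup_le ⟨_, 0, by simp, rfl⟩ ?_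
  rintro _ ⟨z, hz, rfl⟩
  exact h z (by simpa using hz)

lemma PhiIncreasing.le_apply {φ n : ℕ → ℕ} (h : PhiIncreasing φ n) : ∀ k, k ≤ n k
  | 0 => Nat.zero_le _
  | 1 => h.1 1 le_rfl
  | k + 2 => by
    have h2 : n (k + 1) + φ (n (k + 1)) < n (k + 2) := h.2 (k + 1) (by omega)
    have := h.le_apply (k + 1)
    omega

/-- Cauchy's estimate on circles of radius `1`. -/
lemma norm_deriv_iterate_sub_le {x y : ℂ → ℂ} (hx : Differentiable ℂ x) (hy : Differentiable ℂ y)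
    {l C : ℝ} (h : ∀ z, ‖z‖ ≤ l + 1 → ‖x z - y z‖ ≤ C) (s : ℕ) {z : ℂ} (hz : ‖z‖ ≤ l) :
    ‖deriv^[s] x z - deriv^[s] y z‖ ≤ s.factorial * C := by
  have h1 := Complex.norm_iteratedDeriv_le_of_forall_mem_sphere_norm_le (c := z) (R := 1) (C := C)
    (f := x - y) s one_pos (hx.sub hy).diffContOnCl (fun w hw => h w (by
      rw [mem_sphere, dist_eq_norm] at hw
      calc ‖w‖ = ‖z + (w - z)‖ := by congr 1; ring
        _ ≤ _ := (norm_add_le _ _).trans (by linarith)))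
  rw [iteratedDeriv_sub hx.contDiff.contDiffAt hy.contDiff.contDiffAt,
    iteratedDeriv_eq_iterate, iteratedDeriv_eq_iterate] at h1
  simpa using h1

/-- Proposition 3.9: there is an increasing map `φ : ℕ → ℕ` such that for all
`φ`-increasing sequences `(n_k)`, `(m_k)`, `(t_k)`, every `l, n ≥ 1`, `ε > 0`, entire `f`
and `K ≥ 1`, there are `x ∈ H(ℂ)` and `k₀, k₁, k₂ ≥ K` with `p_l(x) < ε` such that for
every `b ∈ [-n, n]` and `a ∈ 𝕋` suitable approximations hold along the three blocks. -/
theorem stmt_10 :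
    ∃ φ : ℕ → ℕ, Monotone φ ∧
      ∀ n m t : ℕ → ℕ, PhiIncreasing φ n → PhiIncreasing φ m → PhiIncreasing φ t →
        ∀ l nn : ℕ, 1 ≤ l → 1 ≤ nn → ∀ ε : ℝ, 0 < ε →
          ∀ f : ℂ → ℂ, Differentiable ℂ f → ∀ K : ℕ, 1 ≤ K →
            ∃ (x : ℂ → ℂ) (k₀ k₁ k₂ : ℕ), Differentiable ℂ x ∧
              K ≤ k₀ ∧ K ≤ k₁ ∧ K ≤ k₂ ∧ pnorm l x < ε ∧
              ∀ b : ℝ, -(nn : ℝ) ≤ b → b ≤ (nn : ℝ) → ∀ a : ℂ, ‖a‖ = 1 →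
                (∃ s : ℕ, n k₀ ≤ s ∧ s ≤ n k₀ + φ (n k₀) ∧
                  pnorm l (fun z => (Real.exp (b * s) : ℂ) * (deriv^[s] x) z - f z) < ε) ∧
                (∃ s : ℕ, m k₁ ≤ s ∧ s ≤ m k₁ + φ (m k₁) ∧
                  pnorm l (fun z => (Real.exp (b * s) : ℂ) * x (z + (s : ℂ) * a) - f z) < ε) ∧
                (∃ s : ℕ, t k₂ ≤ s ∧ s ≤ t k₂ + φ (t k₂) ∧
                  pnorm l (fun z => (Real.exp (b * s) : ℂ) * x (z + (s : ℂ)) - f z) < ε) := by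
  refine ⟨fun N => N ^ 2, fun a b h => Nat.pow_le_pow_left h 2, ?_⟩
  intro n m t hn hm ht l nn _ _ ε hε f hf K _
  -- Start with the block for `D`, then perturb twice. The constant `η` keeps the derivatives of
  -- order at most `S₁` under control, and the second perturbation is tiny on a disc that contains
  -- all the translated discs of the first one.
  obtain ⟨N₁, H₁⟩ := exists_derivative_block f hf l nn (ε / 4) (by positivity)
  set k₀ := max K N₁
  obtain ⟨x₁, hx₁, hx₁l, hx₁b⟩ := H₁ (n k₀) ((le_max_right _ _).trans (hn.le_apply k₀))
  obtain ⟨N₂, H₂⟩ := exists_translation_block f hf l nn (ε / 4) (by positivity) (l + 1)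
    (by positivity)
  set k₁ := max K N₂
  set S₁ := n k₀ + n k₀ ^ 2
  set S₂ := m k₁ + m k₁ ^ 2
  have hS₁ : 0 < Real.exp (nn * S₁) * S₁.factorial := by positivity
  set η : ℝ := min (ε / 8) (ε / 8 / (Real.exp (nn * S₁) * S₁.factorial)) with hη
  have hη0 : 0 < η := by positivity
  obtain ⟨x₂, hx₂, hx₂l, hx₂b⟩ := H₂ (m k₁) ((le_max_right _ _).trans (hm.le_apply k₁)) x₁ hx₁ η hη0
  obtain ⟨N₃, H₃⟩ := exists_translation_block f hf l nn (ε / 4) (by positivity) (l + 1 + S₂)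
    (by positivity)
  set k₂ := max K N₃
  obtain ⟨x, hx, hxl, hxb⟩ := H₃ (t k₂) ((le_max_right _ _).trans (ht.le_apply k₂)) x₂ hx₂
    (min η (ε / 4 * Real.exp (-(nn * S₂)))) (by positivity)
  have hclose : ∀ z, ‖z‖ ≤ (l : ℝ) + 1 → ‖x z - x₁ z‖ ≤ 2 * η := fun z hz => by
    have h1 := (hxl z (hz.trans (by linarith [(Nat.cast_nonneg S₂ : (0 : ℝ) ≤ S₂)]))).le.trans
      (min_le_left _ _)
    have h2 := (hx₂l z hz).le
    calc ‖x z - x₁ z‖ = ‖(x z - x₂ z) + (x₂ z - x₁ z)‖ := by congr 1; ring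
      _ ≤ η + η := (norm_add_le _ _).trans (by gcongr)
      _ = 2 * η := by ring
  refine ⟨x, k₀, k₁, k₂, hx, le_max_left _ _, le_max_left _ _, le_max_left _ _, ?_, ?_⟩
  · refine (pnorm_le (C := ε / 2) fun z hz => ?_).trans_lt (by linarith)
    have h1 := hclose z (by linarith)
    have h2 := hx₁l z hz
    have h3 : η ≤ ε / 8 := min_le_left _ _
    calc ‖x z‖ = ‖(x z - x₁ z) + x₁ z‖ := by congr 1; ring
      _ ≤ _ := norm_add_le _ _
      _ ≤ ε / 2 := by linarith
  intro b hb1 hb2 a ha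
  have hexp : ∀ s S : ℕ, s ≤ S → ‖(Real.exp (b * s) : ℂ)‖ ≤ Real.exp (nn * S) := fun s S h => by
    rw [Complex.norm_real, Real.norm_of_nonneg (Real.exp_pos _).le]
    gcongr
  refine ⟨?_, ?_, ?_⟩
  · obtain ⟨s, hs1, hs2, hs⟩ := hx₁b b hb1 hb2
    refine ⟨s, hs1, hs2, (pnorm_le (C := ε / 2) fun z hz => ?_).trans_lt (by linarith)⟩
    have h1 := norm_deriv_iterate_sub_le hx hx₁ hclose s hz
    have h2 := hs z hz
    have h3 : ‖(Real.exp (b * s) : ℂ) * (deriv^[s] x z - deriv^[s] x₁ z)‖ ≤ ε / 4 := by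
      rw [norm_mul]
      calc _ ≤ Real.exp (nn * S₁) * (S₁.factorial * (2 * η)) := by
            gcongr
            · exact hexp s S₁ hs2
            · exact h1.trans (by gcongr)
        _ = 2 * (η * (Real.exp (nn * S₁) * S₁.factorial)) := by ring
        _ ≤ 2 * (ε / 8) := by
            gcongr
            rw [← le_div_iff₀ hS₁]
            exact min_le_right _ _
        _ = ε / 4 := by ring
    calc _ = ‖(Real.exp (b * s) : ℂ) * (deriv^[s] x z - deriv^[s] x₁ z) +
          ((Real.exp (b * s) : ℂ) * deriv^[s] x₁ z - f z)‖ := by congr 1; ring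
      _ ≤ ε / 4 + ε / 4 := (norm_add_le _ _).trans (by gcongr)
      _ = ε / 2 := by ring
  · obtain ⟨s, hs1, hs2, hs⟩ := hx₂b b hb1 hb2 a ha
    refine ⟨s, hs1, hs2, (pnorm_le (C := ε / 2) fun z hz => ?_).trans_lt (by linarith)⟩
    have hsS : (s : ℝ) ≤ S₂ := by exact_mod_cast hs2
    have h1 := (hxl (z + s * a) (by
      refine (norm_add_le _ _).trans ?_
      rw [norm_mul, ha, Complex.norm_natCast]
      linarith)).le.trans (min_le_right _ _)
    have h2 := hs z hz
    have h3 : ‖(Real.exp (b * s) : ℂ) * (x (z + s * a) - x₂ (z + s * a))‖ ≤ ε / 4 := by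
      rw [norm_mul]
      calc _ ≤ Real.exp (nn * S₂) * (ε / 4 * Real.exp (-(nn * S₂))) := by
            gcongr
            exact hexp s S₂ hs2
        _ = ε / 4 := by
            rw [mul_left_comm, ← Real.exp_add, add_neg_cancel, Real.exp_zero, mul_one]
    calc _ = ‖(Real.exp (b * s) : ℂ) * (x (z + s * a) - x₂ (z + s * a)) +
          ((Real.exp (b * s) : ℂ) * x₂ (z + s * a) - f z)‖ := by congr 1; ring
      _ ≤ ε / 4 + ε / 4 := (norm_add_le _ _).trans (by gcongr)
      _ = ε / 2 := by ring
  · obtain ⟨s, hs1, hs2, hs⟩ := hxb b hb1 hb2 1 norm_one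
    refine ⟨s, hs1, hs2, (pnorm_le (C := ε / 4) fun z hz => ?_).trans_lt (by linarith)⟩
    simpa using hs z hz
end

section
/- Let (P_l)_{l≥k} be a sequence of nonzero polynomials such that val(P_{l+1}) > deg(P_l) for every l (so the P_l have pairwise disjoint sets of monomial degrees) and p₁(P_l) ≥ 1/2 for every l. If a series f = ∑_{l=k}^{∞} a_l P_l with complex coefficients a_l converges in H(ℂ), then for every l ≥ k, |a_l| ≤ 2 p'₁(f), where p'₁(f) = ∑_{k=0}^∞ |x_k| is the sum of the absolute values of the Taylor coefficients of f at 0 (with the convention that the bound holds whenever this sum is finite). -/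
/-!
Convergence in `H(ℂ)` forces convergence of every Taylor coefficient at `0`, by Cauchy's estimate
on the unit circle (`tendsto_iteratedDeriv_of_tendstoH`). Since the degree ranges of the `P_l` are
pairwise disjoint, a degree `j` in the support of `P_l` only receives the contribution of
`a_l P_l`, so the `j`-th Taylor coefficient of `f` is exactly `a_l * (P_l).coeff j`. Summing over
the support of `P_l` gives `‖a_l‖ * p'₁(P_l) ≤ p'₁(f)`, and
`1/2 ≤ p₁(P_l) ≤ p'₁(P_l)` finishes the proof.
-/

open Filter Metric Set

theorem iteratedDeriv_polynomial_eval_zero (p : Polynomial ℂ) (j : ℕ) :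
    iteratedDeriv j (fun z => p.eval z) 0 = (j.factorial : ℂ) * p.coeff j := by
  have h : ∀ (n : ℕ) (q : Polynomial ℂ),
      iteratedDeriv n (fun z => q.eval z) = fun z => (Polynomial.derivative^[n] q).eval z := by
    intro n
    induction n with
    | zero => intro q; simp
    | succ n ih =>
      intro q
      have hd : deriv (fun z => q.eval z) = fun z => (Polynomial.derivative q).eval z := by
        funext z; exact q.deriv
      rw [iteratedDeriv_succ', hd, ih]
      rfl
  rw [h]
  simp only [← Polynomial.coeff_zero_eq_eval_zero, Polynomial.coeff_iterate_derivative,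
    zero_add, Nat.descFactorial_self, nsmul_eq_mul]

theorem norm_le_pnorm {g : ℂ → ℂ} (hg : Continuous g) {r : ℝ} {z : ℂ}
    (hz : z ∈ Metric.closedBall (0 : ℂ) r) : ‖g z‖ ≤ pnorm r g := by
  apply le_csSup
  · exact ((isCompact_closedBall (0 : ℂ) r).image hg.norm).bddAbove
  · exact ⟨z, hz, rfl⟩

/-- The inequality `p₁(P) ≤ p'₁(P)` for a polynomial `P`. -/
theorem pnorm_one_eval_le (p : Polynomial ℂ) :
    pnorm 1 (fun z => p.eval z) ≤ ∑ j ∈ p.support, ‖p.coeff j‖ := by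
  apply csSup_le
  · exact ⟨_, 0, by simp, rfl⟩
  · rintro _ ⟨z, hz, rfl⟩
    have hz' : ‖z‖ ≤ 1 := by simpa using hz
    change ‖p.eval z‖ ≤ _
    rw [Polynomial.eval_eq_sum, Polynomial.sum]
    refine (norm_sum_le _ _).trans (Finset.sum_le_sum fun j _ => ?_)
    rw [norm_mul, norm_pow]
    exact mul_le_of_le_one_right (norm_nonneg _) (pow_le_one₀ (norm_nonneg _) hz')

/-- Convergence in `H(ℂ)` implies convergence of all derivatives at `0`, by Cauchy's estimate on
the unit circle. -/
theorem tendsto_iteratedDeriv_of_tendstoH {F : ℕ → ℂ → ℂ} {f : ℂ → ℂ}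
    (hF : ∀ n, Differentiable ℂ (F n)) (hf : Differentiable ℂ f) (h : TendstoH F f) (j : ℕ) :
    Tendsto (fun n => iteratedDeriv j (F n) 0) atTop (nhds (iteratedDeriv j f 0)) := by
  rw [tendsto_iff_norm_sub_tendsto_zero]
  have h1 : Tendsto (fun n => (j.factorial : ℝ) * pnorm 1 (F n - f)) atTop (nhds 0) := by
    have := (h 1 le_rfl).const_mul (j.factorial : ℝ)
    simpa using this
  refine squeeze_zero (fun _ => norm_nonneg _) (fun n => ?_) h1
  have hd : Differentiable ℂ (F n - f) := (hF n).sub hf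
  rw [← iteratedDeriv_sub (hF n).contDiff.contDiffAt hf.contDiff.contDiffAt]
  have := Complex.norm_iteratedDeriv_le_of_forall_mem_sphere_norm_le (c := 0) (R := 1)
    (C := pnorm 1 (F n - f)) (f := F n - f) j one_pos hd.diffContOnCl
    (fun z hz => norm_le_pnorm hd.continuous (Metric.sphere_subset_closedBall hz))
  simpa using this

theorem natDegree_lt_natTrailingDegree {k : ℕ} {P : ℕ → Polynomial ℂ}
    (hval : ∀ l, k ≤ l → (P l).natDegree < (P (l + 1)).natTrailingDegree)
    {l m : ℕ} (hl : k ≤ l) (hlm : l < m) :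
    (P l).natDegree < (P m).natTrailingDegree := by
  induction m, hlm using Nat.le_induction with
  | base => exact hval l hl
  | succ m hm ih =>
    exact (ih.trans_le (P m).natTrailingDegree_le_natDegree).trans (hval m (by omega))

/-- The supports of the `P_l` are pairwise disjoint. -/
theorem coeff_eq_zero_of_mem_support {k : ℕ} {P : ℕ → Polynomial ℂ}
    (hval : ∀ l, k ≤ l → (P l).natDegree < (P (l + 1)).natTrailingDegree)
    {l m j : ℕ} (hl : k ≤ l) (hm : k ≤ m) (hne : m ≠ l) (hj : j ∈ (P l).support) :
    (P m).coeff j = 0 := by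
  rcases lt_or_gt_of_ne hne with h | h
  · exact Polynomial.coeff_eq_zero_of_natDegree_lt
      ((natDegree_lt_natTrailingDegree hval hm h).trans_le
        (Polynomial.natTrailingDegree_le_of_mem_supp j hj))
  · exact Polynomial.coeff_eq_zero_of_lt_natTrailingDegree
      ((Polynomial.le_natDegree_of_mem_supp j hj).trans_lt
        (natDegree_lt_natTrailingDegree hval hl h))

/-- If `f = ∑_{l ≥ k} a_l P_l` converges in `H(ℂ)`, where the nonzero polynomials `P_l`
satisfy `val(P_{l+1}) > deg(P_l)` and `p₁(P_l) ≥ 1/2`, then `|a_l| ≤ 2 p'₁(f)` for every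
`l ≥ k`, where `p'₁(f) = ∑_j |f^{(j)}(0)| / j!` is the sum of the absolute values of the
Taylor coefficients of `f` at `0` (assumed finite). -/
theorem stmt_13 (k : ℕ) (P : ℕ → Polynomial ℂ) (a : ℕ → ℂ) (f : ℂ → ℂ)
    (hP0 : ∀ l, k ≤ l → P l ≠ 0)
    (hval : ∀ l, k ≤ l → (P l).natDegree < (P (l + 1)).natTrailingDegree)
    (hp1 : ∀ l, k ≤ l → (1 : ℝ) / 2 ≤ pnorm 1 (fun z => (P l).eval z))
    (hf : Differentiable ℂ f)
    (hconv : TendstoH (fun N => fun z => ∑ l ∈ Finset.Icc k (k + N), a l * (P l).eval z) f)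
    (hsum : Summable fun j : ℕ => ‖iteratedDeriv j f 0‖ / (j.factorial : ℝ)) :
    ∀ l, k ≤ l → ‖a l‖ ≤ 2 * ∑' j : ℕ, ‖iteratedDeriv j f 0‖ / (j.factorial : ℝ) := by
  intro l hl
  set S : ℕ → Polynomial ℂ := fun N =>
    ∑ m ∈ Finset.Icc k (k + N), Polynomial.C (a m) * P m with hS
  have hFS : (fun N => fun z => ∑ m ∈ Finset.Icc k (k + N), a m * (P m).eval z) =
      fun N => fun z => (S N).eval z := by
    funext N z
    simp [hS, Polynomial.eval_finsetSum]
  rw [hFS] at hconv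
  have hcoef : ∀ j ∈ (P l).support,
      iteratedDeriv j f 0 = (j.factorial : ℂ) * (a l * (P l).coeff j) := by
    intro j hj
    have ht := tendsto_iteratedDeriv_of_tendstoH (fun N => (S N).differentiable) hf hconv j
    refine tendsto_nhds_unique ht (tendsto_const_nhds.congr' ?_)
    -- As soon as `N ≥ l - k`, the `j`-th coefficient of the partial sum is stationary.
    filter_upwards [eventually_ge_atTop (l - k)] with N hN
    rw [iteratedDeriv_polynomial_eval_zero]
    congr 1
    simp only [hS, Polynomial.finsetSum_coeff, Polynomial.coeff_C_mul]
    symm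
    apply Finset.sum_eq_single_of_mem l (by rw [Finset.mem_Icc]; omega)
    intro m hm hne
    rw [coeff_eq_zero_of_mem_support hval hl (Finset.mem_Icc.1 hm).1 hne hj, mul_zero]
  have hsum_le : ‖a l‖ * ∑ j ∈ (P l).support, ‖(P l).coeff j‖ ≤
      ∑' j : ℕ, ‖iteratedDeriv j f 0‖ / (j.factorial : ℝ) := by
    rw [Finset.mul_sum]
    refine le_of_eq_of_le (Finset.sum_congr rfl fun j hj => ?_)
      (hsum.sum_le_tsum (P l).support fun j _ => by positivity)
    have hfac : (j.factorial : ℝ) ≠ 0 := by positivity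
    rw [hcoef j hj, norm_mul, norm_mul, Complex.norm_natCast, mul_div_cancel_left₀ _ hfac]
  have hhalf := (hp1 l hl).trans (pnorm_one_eval_le (P l))
  have := mul_le_mul_of_nonneg_left hhalf (norm_nonneg (a l))
  linarith
end
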